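/- arXiv:math/0004121 — 3 statements merged into one kernel-verified Lean document; each statement's English description precedes it below -/
import Mathlib

section
/- (Example 3.3, eqs. (3.26)–(3.27)) Let X be a finite set, let P₁, P₂, P̄ be probability distributions on X with P̄(x) > 0 for all x ∈ X, let α₁, α₂ > 0 with α₁ + α₂ = 1, and let the null hypothesis be the mixed source P_n = α₁ P₁^{⊗n} + α₂ P₂^{⊗n} and the alternative hypothesis be Q_n = P̄^{⊗n} on X^n. Then: (a) for every r > 0, B_e(r) ≤ min(D(P₁‖P̄), D(P₂‖P̄)); and (b) lim_{r↓0} B_e(r) = min(D(P₁‖P̄), D(P₂‖P̄)), where D denotes the Kullback–Leibler divergence (natural logarithm). -/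
open MeasureTheory Filter
open scoped ENNReal NNReal

/-- The exponent `-(1/n) log p` of a nonneg extended real `p`, valued in `EReal`,
with the conventions `-log 0 = +∞` and `-log ∞ = -∞`. -/
noncomputable def expRate (n : ℕ) (p : ℝ≥0∞) : EReal :=
  (((n : ℝ)⁻¹ : ℝ) : EReal) * (-(ENNReal.log p))

/-- The likelihood ratio `dμ/dν`, defined to be `+∞` on the part of the space where
`μ` is singular with respect to `ν` (μ-a.e.). -/
noncomputable def lratio {Ω : Type*} [MeasurableSpace Ω] (μ ν : Measure Ω) (x : Ω) : ℝ≥0∞ :=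
  μ.rnDeriv (μ + ν) x / ν.rnDeriv (μ + ν) x

section Setup

variable {Ω : ℕ → Type*} [∀ n, MeasurableSpace (Ω n)]

/-- `η(R) = liminf_n -(1/n) log P_n{ (1/n) log dP_n/dQ_n ≤ R }`. -/
noncomputable def eta (P Q : ∀ n, Measure (Ω n)) (R : ℝ) : EReal :=
  Filter.atTop.liminf fun n =>
    expRate n ((P n) {x | lratio (P n) (Q n) x ≤ ENNReal.ofReal (Real.exp (n * R))})

/-- `E` is `r`-achievable: there are measurable acceptance regions `A n` with
`liminf -(1/n) log μ_n ≥ r` and `liminf -(1/n) log λ_n ≥ E`. -/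
def rAchievable (P Q : ∀ n, Measure (Ω n)) (r E : ℝ) : Prop :=
  ∃ A : ∀ n, Set (Ω n), (∀ n, MeasurableSet (A n)) ∧
    (r : EReal) ≤ Filter.atTop.liminf (fun n => expRate n ((P n) (A n)ᶜ)) ∧
    (E : EReal) ≤ Filter.atTop.liminf (fun n => expRate n ((Q n) (A n)))

/-- The optimal error exponent `B_e(r)`: the supremum of all `r`-achievable `E`. -/
noncomputable def Be (P Q : ∀ n, Measure (Ω n)) (r : ℝ) : EReal :=
  sSup {x : EReal | ∃ E : ℝ, rAchievable P Q r E ∧ x = (E : EReal)}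

end Setup

/-- The discrete measure on a finite type given by the weights `p`. -/
noncomputable def wMeasure {X : Type*} [Fintype X] [MeasurableSpace X] (p : X → ℝ) :
    Measure X :=
  ∑ x : X, ENNReal.ofReal (p x) • Measure.dirac x

/-- The Kullback–Leibler divergence `D(q‖p) = ∑ x q(x) log (q(x)/p(x))` between two
probability distributions on a finite set (natural logarithm). -/
noncomputable def KLfin {X : Type*} [Fintype X] (q p : X → ℝ) : ℝ :=
  ∑ x : X, q x * Real.log (q x / p x)

open Classical in
noncomputable def W {X : Type*} [Fintype X] (p : X → ℝ) (n : ℕ) (A : Set (Fin n → X)) : ℝ :=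
  ∑ x : Fin n → X, if x ∈ A then ∏ i, p (x i) else 0

lemma W_tot {X : Type*} [Fintype X] (p : X → ℝ) (n : ℕ) :
    ∑ x : Fin n → X, ∏ i, p (x i) = (∑ x, p x) ^ n := by
  classical
  have := Finset.prod_univ_sum (fun _ : Fin n => (Finset.univ : Finset X)) (fun _ x => p x)
  simp at this
  rw [this]

lemma W_compl {X : Type*} [Fintype X] (p : X → ℝ) (hp1 : ∑ x, p x = 1) (n : ℕ)
    (A : Set (Fin n → X)) : W p n A + W p n Aᶜ = 1 := by
  classical
  rw [W, W, ← Finset.sum_add_distrib]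
  rw [← one_pow n, ← hp1, ← W_tot]
  refine Finset.sum_congr rfl fun x _ => ?_
  by_cases h : x ∈ A <;> simp [h]

lemma W_nonneg {X : Type*} [Fintype X] (p : X → ℝ) (hp : ∀ x, 0 ≤ p x) (n : ℕ)
    (A : Set (Fin n → X)) : 0 ≤ W p n A := by
  refine Finset.sum_nonneg fun x _ => ?_
  split_ifs
  · exact Finset.prod_nonneg fun i _ => hp _
  · rfl

lemma wMeasure_singleton {X : Type*} [Fintype X] [MeasurableSpace X]
    [MeasurableSingletonClass X] (p : X → ℝ) (x : X) :
    wMeasure p {x} = ENNReal.ofReal (p x) := by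
  classical
  simp only [wMeasure, Measure.coe_finsetSum, Finset.sum_apply, Measure.smul_apply,
    Measure.dirac_apply, smul_eq_mul]
  rw [Finset.sum_eq_single x]
  · simp
  · intro b _ hb
    simp [hb]
  · simp

instance wMeasure_finite {X : Type*} [Fintype X] [MeasurableSpace X]
    (p : X → ℝ) : IsFiniteMeasure (wMeasure p) := by
  constructor
  simp only [wMeasure, Measure.coe_finsetSum, Finset.sum_apply, Measure.smul_apply, smul_eq_mul]
  refine ENNReal.sum_lt_top.2 fun x _ => ?_
  simp

lemma pi_eq_W {X : Type*} [Fintype X] [MeasurableSpace X]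
    [MeasurableSingletonClass X] (p : X → ℝ) (hp : ∀ x, 0 ≤ p x) (n : ℕ)
    (A : Set (Fin n → X)) :
    Measure.pi (fun _ : Fin n => wMeasure p) A = ENNReal.ofReal (W p n A) := by
  classical
  have h : A = ((Finset.univ.filter (· ∈ A) : Finset (Fin n → X)) : Set (Fin n → X)) := by
    ext; simp
  conv_lhs => rw [h]
  rw [← sum_measure_singleton, W, ← Finset.sum_filter, ENNReal.ofReal_sum_of_nonneg]
  · refine Finset.sum_congr (by ext; simp) fun x _ => ?_
    rw [Measure.pi_singleton, ENNReal.ofReal_prod_of_nonneg fun i _ => hp _]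
    simp only [wMeasure_singleton]
  · exact fun x _ => Finset.prod_nonneg fun i _ => hp _

lemma le_expRate_iff {n : ℕ} (hn : 0 < n) (c : ℝ) (p : ℝ) (hp : 0 ≤ p) :
    (c : EReal) ≤ expRate n (ENNReal.ofReal p) ↔ p ≤ Real.exp (-(n * c)) := by
  have hn' : (0:ℝ) < n := by exact_mod_cast hn
  rcases hp.eq_or_lt with rfl | hp
  · simp [expRate, Real.exp_nonneg]
    rw [EReal.coe_mul_top_of_pos (by positivity)]
    exact le_top
  · rw [expRate, ENNReal.log_ofReal_of_pos hp]
    rw [← EReal.coe_neg, ← EReal.coe_mul, EReal.coe_le_coe_iff, ← Real.log_le_iff_le_exp hp,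
      inv_mul_eq_div, le_div_iff₀ hn']
    constructor <;> intro h <;> linarith

/-- Chernoff exponent. -/
lemma chernoff {X : Type*} [Fintype X] (P : X → ℝ) (hP : ∀ x, 0 ≤ P x)
    (hP1 : ∑ x, P x = 1) (f : X → ℝ) (hf : ∑ x, P x * f x < 0) :
    ∃ s > 0, 0 < ∑ x, P x * Real.exp (s * f x) ∧ ∑ x, P x * Real.exp (s * f x) < 1 := by
  have hd : HasDerivAt (fun s : ℝ => ∑ x, P x * Real.exp (s * f x)) (∑ x, P x * f x) 0 := by
    refine HasDerivAt.fun_sum fun x _ => ?_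
    have h1 : HasDerivAt (fun s : ℝ => s * f x) (f x) 0 := by
      simpa using (hasDerivAt_id (0:ℝ)).mul_const (f x)
    have := (h1.exp).const_mul (P x)
    simpa using this
  have h2 := hd.tendsto_slope_zero_right
  have h3 := (h2.eventually (eventually_lt_nhds hf)).and self_mem_nhdsWithin
  obtain ⟨s, hs, hs0⟩ := h3.exists
  have hs0 : 0 < s := hs0
  refine ⟨s, hs0, ?_, ?_⟩
  · obtain ⟨x, -, hx⟩ : ∃ x ∈ Finset.univ, 0 < P x := by
      by_contra! h
      have := Finset.sum_nonpos h
      linarith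
    refine Finset.sum_pos' (fun y _ => mul_nonneg (hP y) (Real.exp_nonneg _))
      ⟨x, Finset.mem_univ _, by positivity⟩
  · simp only [zero_add, zero_mul, Real.exp_zero, mul_one, hP1, smul_eq_mul] at hs
    by_contra! h
    have : 0 ≤ s⁻¹ * (∑ x, P x * Real.exp (s * f x) - 1) := by
      apply mul_nonneg (by positivity); linarith
    linarith

lemma prod_tilt {X : Type*} (P f : X → ℝ) (s : ℝ) (n : ℕ) (x : Fin n → X) :
    ∏ i, (P (x i) * Real.exp (s * f (x i)))
      = (∏ i, P (x i)) * Real.exp (s * ∑ i, f (x i)) := by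
  rw [Finset.prod_mul_distrib, ← Real.exp_sum, Finset.mul_sum]

lemma prod_lr {X : Type*} (P Q : X → ℝ) (hQ : ∀ x, 0 < Q x) (n : ℕ) (x : Fin n → X)
    (h : ∏ i, P (x i) ≠ 0) (hP : ∀ x, 0 ≤ P x) :
    ∏ i, P (x i) = Real.exp (∑ i, Real.log (P (x i) / Q (x i))) * ∏ i, Q (x i) := by
  rw [Real.exp_sum, ← Finset.prod_mul_distrib]
  refine Finset.prod_congr rfl fun i _ => ?_
  have h1 := Finset.prod_ne_zero_iff.1 h i (Finset.mem_univ _)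
  have h2 := hQ (x i)
  have h3 : 0 < P (x i) := lt_of_le_of_ne (hP _) (Ne.symm h1)
  rw [Real.exp_log (by positivity)]
  field_simp

lemma KL_shift {X : Type*} [Fintype X] (P Q : X → ℝ) (hP1 : ∑ x, P x = 1) (b : ℝ) :
    ∑ x, P x * (Real.log (P x / Q x) - b) = KLfin P Q - b := by
  simp only [mul_sub, Finset.sum_sub_distrib, ← Finset.sum_mul, hP1, KLfin, one_mul]

/-- Converse bound. -/
lemma converse {X : Type*} [Fintype X] (P Q : X → ℝ) (hP : ∀ x, 0 ≤ P x)
    (hP1 : ∑ x, P x = 1) (hQ : ∀ x, 0 < Q x) (b : ℝ) (hb : KLfin P Q < b) :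
    ∃ ρ : ℝ, 0 < ρ ∧ ρ < 1 ∧ ∀ n (A : Set (Fin n → X)),
      W P n A ≤ Real.exp (n * b) * W Q n A + ρ ^ n := by
  obtain ⟨s, hs, h0, h1⟩ := chernoff P hP hP1 (fun x => Real.log (P x / Q x) - b)
    (by rw [KL_shift P Q hP1]; linarith)
  refine ⟨_, h0, h1, fun n A => ?_⟩
  rw [← W_tot, W, W, Finset.mul_sum, ← Finset.sum_add_distrib]
  refine Finset.sum_le_sum fun x _ => ?_
  have hpn : 0 ≤ ∏ i, P (x i) := Finset.prod_nonneg fun i _ => hP _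
  have hqn : 0 < ∏ i, Q (x i) := Finset.prod_pos fun i _ => hQ _
  rw [prod_tilt P (fun x => Real.log (P x / Q x) - b)]
  have hE := Real.exp_nonneg (s * ∑ i, (Real.log (P (x i) / Q (x i)) - b))
  split_ifs
  · by_cases hz : ∏ i, P (x i) = 0
    · rw [hz]; positivity
    · rcases le_total (∑ i, (Real.log (P (x i) / Q (x i)) - b)) 0 with h | h
      · have h' : ∑ i, Real.log (P (x i) / Q (x i)) ≤ n * b := by
          simpa [Finset.sum_sub_distrib] using h
        have : ∏ i, P (x i) ≤ Real.exp (n * b) * ∏ i, Q (x i) := by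
          rw [prod_lr P Q hQ n x hz hP]
          gcongr
        have := mul_nonneg hpn hE
        linarith
      · have : 1 ≤ Real.exp (s * ∑ i, (Real.log (P (x i) / Q (x i)) - b)) :=
          Real.one_le_exp (by positivity)
        have h4 : (∏ i, P (x i)) * 1 ≤ _ := mul_le_mul_of_nonneg_left this hpn
        have : 0 ≤ Real.exp (n * b) * ∏ i, Q (x i) := by positivity
        linarith
  · have := mul_nonneg hpn hE
    linarith

/-- Achievability region. -/
def regA {X : Type*} (P Q : X → ℝ) (a : ℝ) (n : ℕ) : Set (Fin n → X) :=
  {x | Real.exp (n * a) * ∏ i, Q (x i) ≤ ∏ i, P (x i)}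

lemma regA_Q {X : Type*} [Fintype X] (P Q : X → ℝ) (hP : ∀ x, 0 ≤ P x)
    (hP1 : ∑ x, P x = 1) (a : ℝ) (n : ℕ) :
    W Q n (regA P Q a n) ≤ Real.exp (-(n * a)) := by
  have : Real.exp (n * a) * W Q n (regA P Q a n) ≤ 1 := by
    rw [← one_pow n, ← hP1, ← W_tot, W, Finset.mul_sum]
    refine Finset.sum_le_sum fun x _ => ?_
    have hpn : 0 ≤ ∏ i, P (x i) := Finset.prod_nonneg fun i _ => hP _
    split_ifs with h
    · exact h
    · simpa using hpn
  rw [Real.exp_neg, ← one_div, le_div_iff₀ (Real.exp_pos _)]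
  linarith

lemma regA_P {X : Type*} [Fintype X] (P Q : X → ℝ) (hP : ∀ x, 0 ≤ P x)
    (hP1 : ∑ x, P x = 1) (hQ : ∀ x, 0 < Q x) (a : ℝ) (ha : a < KLfin P Q) :
    ∃ ρ : ℝ, 0 < ρ ∧ ρ < 1 ∧ ∀ n, W P n (regA P Q a n)ᶜ ≤ ρ ^ n := by
  obtain ⟨s, hs, h0, h1⟩ := chernoff P hP hP1 (fun x => -(Real.log (P x / Q x) - a))
    (by simp only [mul_neg, Finset.sum_neg_distrib]; rw [KL_shift P Q hP1]; linarith)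
  refine ⟨_, h0, h1, fun n => ?_⟩
  rw [← W_tot, W]
  refine Finset.sum_le_sum fun x _ => ?_
  have hpn : 0 ≤ ∏ i, P (x i) := Finset.prod_nonneg fun i _ => hP _
  have hqn : 0 < ∏ i, Q (x i) := Finset.prod_pos fun i _ => hQ _
  rw [prod_tilt P (fun x => -(Real.log (P x / Q x) - a))]
  have hE := Real.exp_nonneg (s * ∑ i, -(Real.log (P (x i) / Q (x i)) - a))
  split_ifs with h
  · by_cases hz : ∏ i, P (x i) = 0
    · rw [hz]; simp
    · simp only [regA, Set.mem_compl_iff, Set.mem_ofPred_eq, not_le] at h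
      rw [prod_lr P Q hQ n x hz hP] at h
      have h' := Real.exp_lt_exp.1 (lt_of_mul_lt_mul_right h hqn.le)
      have : 0 ≤ ∑ i, -(Real.log (P (x i) / Q (x i)) - a) := by
        simp [Finset.sum_sub_distrib]; linarith
      have : 1 ≤ Real.exp (s * ∑ i, -(Real.log (P (x i) / Q (x i)) - a)) :=
        Real.one_le_exp (by positivity)
      have h4 : (∏ i, P (x i)) * 1 ≤ _ := mul_le_mul_of_nonneg_left this hpn
      linarith
  · exact mul_nonneg hpn hE

/-- Converse half: an `r`-achievable exponent is at most the divergence of any component. -/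
lemma ach_le {X : Type*} [Fintype X] [MeasurableSpace X] [MeasurableSingletonClass X]
    (P Q : X → ℝ) (hP : ∀ x, 0 ≤ P x) (hP1 : ∑ x, P x = 1) (hQ : ∀ x, 0 < Q x)
    (α : ℝ) (hα : 0 < α) (M : ∀ n, Measure (Fin n → X)) (V : ∀ n, Set (Fin n → X) → ℝ)
    (hV : ∀ n A, M n A = ENNReal.ofReal (V n A)) (hV0 : ∀ n A, α * W P n A ≤ V n A)
    (r E : ℝ) (hr : 0 < r)
    (h : rAchievable M (fun n => Measure.pi fun _ : Fin n => wMeasure Q) r E) :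
    E ≤ KLfin P Q := by
  obtain ⟨A, -, h1, h2⟩ := h
  by_contra! hlt
  obtain ⟨b, hb, hbE⟩ := exists_between hlt
  obtain ⟨b', hb', hbE'⟩ := exists_between hbE
  obtain ⟨ρ, hρ0, hρ1, hρ⟩ := converse P Q hP hP1 hQ b hb
  have hr2 : ((r / 2 : ℝ) : EReal) < (r : EReal) := EReal.coe_lt_coe_iff.2 (by linarith)
  have e1 := eventually_lt_of_lt_liminf (hr2.trans_le h1)
  have e2 := eventually_lt_of_lt_liminf ((EReal.coe_lt_coe_iff.2 hbE').trans_le h2)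
  have geo : ∀ c : ℝ, 0 < c → Tendsto (fun n : ℕ => Real.exp (-(n * c))) atTop (nhds 0) := by
    intro c hc
    refine Real.tendsto_exp_neg_atTop_nhds_zero.comp ?_
    exact tendsto_natCast_atTop_atTop.atTop_mul_const hc
  have t1 : Tendsto (fun n : ℕ => Real.exp (-(n * (r / 2))) / α + ρ ^ n
      + Real.exp (-(n * (b' - b)))) atTop (nhds 0) := by
    have := (((geo (r / 2) (by linarith)).div_const α).add
      (tendsto_pow_atTop_nhds_zero_of_lt_one hρ0.le hρ1)).add (geo (b' - b) (by linarith))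
    simpa using this
  have e3 := t1.eventually (eventually_lt_nhds (zero_lt_one))
  obtain ⟨n, ⟨⟨k1, k2⟩, k3⟩, hn⟩ := ((e1.and e2).and e3).and (eventually_gt_atTop 0) |>.exists
  have hVn : 0 ≤ V n (A n)ᶜ :=
    (mul_nonneg hα.le (W_nonneg P hP n _)).trans (hV0 n _)
  have k1 := k1.le
  have k2 := k2.le
  rw [hV, le_expRate_iff hn _ _ hVn] at k1
  have hQ0 : ∀ x, 0 ≤ Q x := fun x => (hQ x).le
  simp only [] at k2
  rw [pi_eq_W Q hQ0, le_expRate_iff hn _ _ (W_nonneg Q hQ0 n _)] at k2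
  have k4 : W P n (A n)ᶜ ≤ Real.exp (-(n * (r / 2))) / α := by
    rw [le_div_iff₀ hα]
    linarith [hV0 n (A n)ᶜ]
  have k5 := hρ n (A n)
  have k6 := W_compl P hP1 n (A n)
  have k7 : Real.exp (n * b) * W Q n (A n) ≤ Real.exp (-(n * (b' - b))) := by
    calc _ ≤ Real.exp (n * b) * Real.exp (-(n * b')) := by gcongr
      _ = _ := by rw [← Real.exp_add]; ring_nf
  linarith

/-- Weights of the mixed source. -/
noncomputable def mixW {X : Type*} [Fintype X] (α₁ α₂ : ℝ) (P₁ P₂ : X → ℝ) (n : ℕ)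
    (A : Set (Fin n → X)) : ℝ := α₁ * W P₁ n A + α₂ * W P₂ n A

lemma mix_eq {X : Type*} [Fintype X] [MeasurableSpace X] [MeasurableSingletonClass X]
    (P₁ P₂ : X → ℝ) (hP₁0 : ∀ x, 0 ≤ P₁ x) (hP₂0 : ∀ x, 0 ≤ P₂ x)
    (α₁ α₂ : ℝ) (hα₁ : 0 < α₁) (hα₂ : 0 < α₂) (n : ℕ) (A : Set (Fin n → X)) :
    (ENNReal.ofReal α₁ • Measure.pi (fun _ : Fin n => wMeasure P₁)
            + ENNReal.ofReal α₂ • Measure.pi (fun _ : Fin n => wMeasure P₂)) A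
      = ENNReal.ofReal (mixW α₁ α₂ P₁ P₂ n A) := by
  have h1 := W_nonneg P₁ hP₁0 n A
  have h2 := W_nonneg P₂ hP₂0 n A
  rw [mixW, ENNReal.ofReal_add (by positivity) (by positivity), ENNReal.ofReal_mul hα₁.le,
    ENNReal.ofReal_mul hα₂.le, Measure.add_apply, Measure.smul_apply, Measure.smul_apply,
    pi_eq_W _ hP₁0, pi_eq_W _ hP₂0, smul_eq_mul, smul_eq_mul]

lemma W_mono {X : Type*} [Fintype X] (p : X → ℝ) (hp : ∀ x, 0 ≤ p x) (n : ℕ)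
    {A B : Set (Fin n → X)} (h : A ⊆ B) : W p n A ≤ W p n B := by
  refine Finset.sum_le_sum fun x _ => ?_
  have : 0 ≤ ∏ i, p (x i) := Finset.prod_nonneg fun i _ => hp _
  by_cases hA : x ∈ A
  · simp [hA, h hA]
  · rw [if_neg hA]; split_ifs <;> simp [this]

lemma W_union {X : Type*} [Fintype X] (p : X → ℝ) (hp : ∀ x, 0 ≤ p x) (n : ℕ)
    (A B : Set (Fin n → X)) : W p n (A ∪ B) ≤ W p n A + W p n B := by
  rw [W, W, W, ← Finset.sum_add_distrib]
  refine Finset.sum_le_sum fun x _ => ?_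
  have : 0 ≤ ∏ i, p (x i) := Finset.prod_nonneg fun i _ => hp _
  by_cases hA : x ∈ A <;> by_cases hB : x ∈ B <;> simp [hA, hB, this]

lemma ach_exists {X : Type*} [Fintype X] [MeasurableSpace X] [MeasurableSingletonClass X]
    (P₁ P₂ Pb : X → ℝ) (hP₁0 : ∀ x, 0 ≤ P₁ x) (hP₂0 : ∀ x, 0 ≤ P₂ x)
    (hP₁1 : ∑ x : X, P₁ x = 1) (hP₂1 : ∑ x : X, P₂ x = 1)
    (hPb : ∀ x, 0 < Pb x)
    (α₁ α₂ : ℝ) (hα₁ : 0 < α₁) (hα₂ : 0 < α₂) (hα : α₁ + α₂ = 1)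
    (c : ℝ) (hc : c < min (KLfin P₁ Pb) (KLfin P₂ Pb)) :
    ∃ r₀ > 0, ∀ r, r < r₀ → rAchievable
      (fun n => ENNReal.ofReal α₁ • Measure.pi (fun _ : Fin n => wMeasure P₁)
            + ENNReal.ofReal α₂ • Measure.pi (fun _ : Fin n => wMeasure P₂))
         (fun n => Measure.pi fun _ : Fin n => wMeasure Pb) r c := by
  obtain ⟨a, hca, ha⟩ := exists_between hc
  obtain ⟨ha1, ha2⟩ := lt_min_iff.1 ha
  obtain ⟨ρ₁, h10, h11, h1⟩ := regA_P P₁ Pb hP₁0 hP₁1 hPb a ha1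
  obtain ⟨ρ₂, h20, h21, h2⟩ := regA_P P₂ Pb hP₂0 hP₂1 hPb a ha2
  have hQ0 : ∀ x, 0 ≤ Pb x := fun x => (hPb x).le
  have hρ0 : 0 < max ρ₁ ρ₂ := lt_max_of_lt_left h10
  have hρ1 : max ρ₁ ρ₂ < 1 := max_lt h11 h21
  refine ⟨-Real.log (max ρ₁ ρ₂), by linarith [Real.log_neg hρ0 hρ1], fun r hr => ?_⟩
  refine ⟨fun n => regA P₁ Pb a n ∪ regA P₂ Pb a n, fun n => (Set.toFinite _).measurableSet,
    ?_, ?_⟩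
  · refine le_liminf_of_le (by isBoundedDefault) ?_
    filter_upwards [eventually_gt_atTop 0] with n hn
    rw [mix_eq P₁ P₂ hP₁0 hP₂0 α₁ α₂ hα₁ hα₂, le_expRate_iff hn]
    · have b1 : W P₁ n (regA P₁ Pb a n ∪ regA P₂ Pb a n)ᶜ ≤ max ρ₁ ρ₂ ^ n :=
        (W_mono P₁ hP₁0 n (Set.compl_subset_compl.2 Set.subset_union_left)).trans
          ((h1 n).trans (pow_le_pow_left₀ h10.le (le_max_left _ _) n))
      have b2 : W P₂ n (regA P₁ Pb a n ∪ regA P₂ Pb a n)ᶜ ≤ max ρ₁ ρ₂ ^ n :=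
        (W_mono P₂ hP₂0 n (Set.compl_subset_compl.2 Set.subset_union_right)).trans
          ((h2 n).trans (pow_le_pow_left₀ h20.le (le_max_right _ _) n))
      have b3 : max ρ₁ ρ₂ ^ n ≤ Real.exp (-(n * r)) := by
        rw [← Real.log_le_iff_le_exp (by positivity), Real.log_pow]
        have : (0:ℝ) ≤ n := by positivity
        nlinarith
      rw [mixW]
      calc _ ≤ α₁ * max ρ₁ ρ₂ ^ n + α₂ * max ρ₁ ρ₂ ^ n := by gcongr
        _ = max ρ₁ ρ₂ ^ n := by rw [← add_mul, hα, one_mul]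
        _ ≤ _ := b3
    · rw [mixW]
      have := W_nonneg P₁ hP₁0 n (regA P₁ Pb a n ∪ regA P₂ Pb a n)ᶜ
      have := W_nonneg P₂ hP₂0 n (regA P₁ Pb a n ∪ regA P₂ Pb a n)ᶜ
      positivity
  · refine le_liminf_of_le (by isBoundedDefault) ?_
    have t : Tendsto (fun n : ℕ => Real.exp (-(n * (a - c)))) atTop (nhds 0) := by
      refine Real.tendsto_exp_neg_atTop_nhds_zero.comp ?_
      exact tendsto_natCast_atTop_atTop.atTop_mul_const (by linarith)
    filter_upwards [eventually_gt_atTop 0,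
      t.eventually (eventually_lt_nhds (show (0:ℝ) < 1 / 2 by norm_num))] with n hn ht
    rw [pi_eq_W Pb hQ0, le_expRate_iff hn _ _ (W_nonneg Pb hQ0 n _)]
    have b1 := regA_Q P₁ Pb hP₁0 hP₁1 a n
    have b2 := regA_Q P₂ Pb hP₂0 hP₂1 a n
    have b3 := W_union Pb hQ0 n (regA P₁ Pb a n) (regA P₂ Pb a n)
    have b4 : Real.exp (-(n * a)) = Real.exp (-(n * (a - c))) * Real.exp (-(n * c)) := by
      rw [← Real.exp_add]; ring_nf
    have := Real.exp_pos (-(n * c))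
    nlinarith

/-- Example 3.3 (eqs. (3.26)–(3.27)): for the mixed i.i.d. null hypothesis
`P_n = α₁ P₁^{⊗n} + α₂ P₂^{⊗n}` against the i.i.d. alternative `P̄^{⊗n}`:
(a) `B_e(r) ≤ min(D(P₁‖P̄), D(P₂‖P̄))` for every `r > 0`, and
(b) `B_e(r) → min(D(P₁‖P̄), D(P₂‖P̄))` as `r ↓ 0`. -/
theorem mixed_vs_memoryless_error_exponent {X : Type*} [Fintype X] [MeasurableSpace X]
    [MeasurableSingletonClass X]
    (P₁ P₂ Pb : X → ℝ) (hP₁0 : ∀ x, 0 ≤ P₁ x) (hP₂0 : ∀ x, 0 ≤ P₂ x)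
    (hP₁1 : ∑ x : X, P₁ x = 1) (hP₂1 : ∑ x : X, P₂ x = 1)
    (hPb : ∀ x, 0 < Pb x) (hPb1 : ∑ x : X, Pb x = 1)
    (α₁ α₂ : ℝ) (hα₁ : 0 < α₁) (hα₂ : 0 < α₂) (hα : α₁ + α₂ = 1) :
    (∀ r : ℝ, 0 < r →
      Be (fun n => ENNReal.ofReal α₁ • Measure.pi (fun _ : Fin n => wMeasure P₁)
            + ENNReal.ofReal α₂ • Measure.pi (fun _ : Fin n => wMeasure P₂))
         (fun n => Measure.pi fun _ : Fin n => wMeasure Pb) r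
        ≤ ((min (KLfin P₁ Pb) (KLfin P₂ Pb) : ℝ) : EReal)) ∧
    Filter.Tendsto
      (fun r : ℝ =>
        Be (fun n => ENNReal.ofReal α₁ • Measure.pi (fun _ : Fin n => wMeasure P₁)
              + ENNReal.ofReal α₂ • Measure.pi (fun _ : Fin n => wMeasure P₂))
           (fun n => Measure.pi fun _ : Fin n => wMeasure Pb) r)
      (nhdsWithin 0 (Set.Ioi 0))
      (nhds ((min (KLfin P₁ Pb) (KLfin P₂ Pb) : ℝ) : EReal)) := by
  have key : ∀ r : ℝ, 0 < r →
      Be (fun n => ENNReal.ofReal α₁ • Measure.pi (fun _ : Fin n => wMeasure P₁)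
            + ENNReal.ofReal α₂ • Measure.pi (fun _ : Fin n => wMeasure P₂))
         (fun n => Measure.pi fun _ : Fin n => wMeasure Pb) r
        ≤ ((min (KLfin P₁ Pb) (KLfin P₂ Pb) : ℝ) : EReal) := by
    intro r hr
    refine sSup_le ?_
    rintro _ ⟨E, hE, rfl⟩
    refine EReal.coe_le_coe_iff.2 (le_min ?_ ?_)
    · refine ach_le P₁ Pb hP₁0 hP₁1 hPb α₁ hα₁ _ (mixW α₁ α₂ P₁ P₂)
        (mix_eq P₁ P₂ hP₁0 hP₂0 α₁ α₂ hα₁ hα₂) (fun n A => ?_) r E hr hE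
      have := W_nonneg P₂ hP₂0 n A
      rw [mixW]
      nlinarith
    · refine ach_le P₂ Pb hP₂0 hP₂1 hPb α₂ hα₂ _ (mixW α₁ α₂ P₁ P₂)
        (mix_eq P₁ P₂ hP₁0 hP₂0 α₁ α₂ hα₁ hα₂) (fun n A => ?_) r E hr hE
      have := W_nonneg P₁ hP₁0 n A
      rw [mixW]
      nlinarith
  refine ⟨key, tendsto_order.2 ⟨fun c hc => ?_, fun c hc => ?_⟩⟩
  · obtain ⟨d, hcd, hd⟩ := EReal.lt_iff_exists_real_btwn.1 hc
    obtain ⟨r₀, hr₀, h⟩ := ach_exists P₁ P₂ Pb hP₁0 hP₂0 hP₁1 hP₂1 hPb α₁ α₂ hα₁ hα₂ hα d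
      (EReal.coe_lt_coe_iff.1 hd)
    filter_upwards [mem_nhdsWithin_of_mem_nhds (Iio_mem_nhds hr₀)] with r hr
    exact hcd.trans_le (le_sSup ⟨d, h r hr, rfl⟩)
  · filter_upwards [self_mem_nhdsWithin] with r hr
    exact (key r hr).trans_lt hc
end

section
/- (Example 3.5, Gaussian error exponent) Let κ ≠ κ̄ be real numbers and σ > 0, and set a = (κ − κ̄)²/(2σ²). Let the null hypothesis P_n be the n-fold product of the Gaussian distribution N(κ, σ²) on ℝⁿ and the alternative hypothesis Q_n be the n-fold product of N(κ̄, σ²) on ℝⁿ. Then for every r > 0, B_e(r) = (√r − √a)² if r ≤ a, and B_e(r) = 0 if r > a. -/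
open MeasureTheory Filter
open scoped ENNReal NNReal

open ProbabilityTheory

namespace GEE

lemma lintegral_pi_prod {n : ℕ} (μ : Measure ℝ) [IsProbabilityMeasure μ] (f : Fin n → ℝ → ℝ≥0∞)
    (hf : ∀ i, Measurable (f i)) :
    ∫⁻ x, ∏ i, f i (x i) ∂(Measure.pi fun _ : Fin n => μ) = ∏ i, ∫⁻ x, f i x ∂μ := by
  have hind : iIndepFun (fun i (x : Fin n → ℝ) => f i (x i)) (Measure.pi fun _ : Fin n => μ) :=
    iIndepFun_pi (fun i => (hf i).aemeasurable)
  rw [lintegral_prod_eq_prod_lintegral_of_indepFun Finset.univ _ hind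
    (fun i => (hf i).comp (measurable_pi_apply i))]
  refine Finset.prod_congr rfl fun i _ => ?_
  exact (measurePreserving_eval (fun _ : Fin n => μ) i).lintegral_comp (hf i)

lemma gauss_density (m m' : ℝ) {v : ℝ≥0} (hv : v ≠ 0) (s : Set ℝ) (hs : MeasurableSet s) :
    ∫⁻ x in s, ENNReal.ofReal (Real.exp ((m' - m) / v * x - (m' ^ 2 - m ^ 2) / (2 * v)))
      ∂(gaussianReal m v) = gaussianReal m' v s := by
  have hv' : (v : ℝ) ≠ 0 := by exact_mod_cast hv
  rw [gaussianReal_apply _ hv, gaussianReal_of_var_ne_zero _ hv,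
    setLIntegral_withDensity_eq_setLIntegral_mul _ (measurable_gaussianPDF _ _) (by fun_prop) hs]
  refine lintegral_congr fun x => ?_
  simp only [Pi.mul_apply, gaussianPDF]
  rw [← ENNReal.ofReal_mul (gaussianPDFReal_nonneg _ _ _), gaussianPDFReal, gaussianPDFReal,
    mul_assoc, ← Real.exp_add]
  congr 3
  field_simp
  ring

lemma gauss_mgf (m : ℝ) (v : ℝ≥0) (t : ℝ) :
    ∫⁻ x, ENNReal.ofReal (Real.exp (t * x)) ∂(gaussianReal m v)
      = ENNReal.ofReal (Real.exp (m * t + v * t ^ 2 / 2)) := by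
  rw [← ofReal_integral_eq_lintegral_ofReal (integrable_exp_mul_gaussianReal t)
    (ae_of_all _ fun x => (Real.exp_pos _).le)]
  congr 1
  have := congrFun (mgf_id_gaussianReal (μ := m) (v := v)) t
  simpa [mgf] using this

/-- product gaussian -/
noncomputable abbrev G (m : ℝ) (v : ℝ≥0) (n : ℕ) : Measure (Fin n → ℝ) :=
  Measure.pi fun _ : Fin n => gaussianReal m v

lemma chernoff (m : ℝ) (v : ℝ≥0) (n : ℕ) (t τ : ℝ) :
    G m v n {x | τ ≤ t * ∑ i, x i}
      ≤ ENNReal.ofReal (Real.exp (n * (m * t + v * t ^ 2 / 2) - τ)) := by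
  have h1 : ∫⁻ x, ENNReal.ofReal (Real.exp (t * ∑ i, x i)) ∂(G m v n)
      = ENNReal.ofReal (Real.exp (n * (m * t + v * t ^ 2 / 2))) := by
    have := lintegral_pi_prod (n := n) (gaussianReal m v)
      (fun _ x => ENNReal.ofReal (Real.exp (t * x))) (fun _ => by fun_prop)
    simp only [gauss_mgf, Finset.prod_const, Finset.card_univ, Fintype.card_fin] at this
    rw [← ENNReal.ofReal_pow (Real.exp_pos _).le, ← Real.exp_nat_mul] at this
    rw [← this]
    refine lintegral_congr fun x => ?_
    rw [← ENNReal.ofReal_prod_of_nonneg (fun i _ => (Real.exp_pos _).le), ← Real.exp_sum,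
      Finset.mul_sum]
  have h2 := meas_ge_le_lintegral_div (μ := G m v n)
    (f := fun x => ENNReal.ofReal (Real.exp (t * ∑ i, x i)))
    (ε := ENNReal.ofReal (Real.exp τ)) (by fun_prop)
    (by simpa using Real.exp_pos τ) ENNReal.ofReal_ne_top
  rw [h1, ← ENNReal.ofReal_div_of_pos (Real.exp_pos _), ← Real.exp_sub] at h2
  refine le_trans (measure_mono fun x hx => ?_) h2
  exact ENNReal.ofReal_le_ofReal (Real.exp_le_exp.2 hx)

lemma G_density (m m' : ℝ) {v : ℝ≥0} (hv : v ≠ 0) (n : ℕ) :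
    G m' v n = (G m v n).withDensity fun x =>
      ENNReal.ofReal (Real.exp ((m' - m) / v * ∑ i, x i - n * ((m' ^ 2 - m ^ 2) / (2 * v)))) := by
  refine Measure.pi_eq fun s hs => ?_
  rw [withDensity_apply _ (MeasurableSet.univ_pi hs),
    ← lintegral_indicator (MeasurableSet.univ_pi hs)]
  have := lintegral_pi_prod (n := n) (gaussianReal m v)
      (fun i => (s i).indicator fun x =>
        ENNReal.ofReal (Real.exp ((m' - m) / v * x - (m' ^ 2 - m ^ 2) / (2 * v))))
      (fun i => Measurable.indicator (by fun_prop) (hs i))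
  simp only [lintegral_indicator (hs _), gauss_density m m' hv _ (hs _)] at this
  rw [← this]
  refine lintegral_congr fun x => ?_
  by_cases hx : x ∈ Set.univ.pi s
  · rw [Set.indicator_of_mem hx]
    rw [Finset.prod_congr rfl fun i _ => Set.indicator_of_mem (hx i trivial) _]
    rw [← ENNReal.ofReal_prod_of_nonneg (fun i _ => (Real.exp_pos _).le), ← Real.exp_sum,
      Finset.sum_sub_distrib, Finset.mul_sum]
    simp
  · rw [Set.indicator_of_notMem hx]
    simp only [Set.mem_univ_pi, not_forall] at hx
    obtain ⟨i, hi⟩ := hx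
    exact (Finset.prod_eq_zero (Finset.mem_univ i) (Set.indicator_of_notMem hi _)).symm

lemma change (m m' : ℝ) {v : ℝ≥0} (hv : v ≠ 0) (r : ℝ) (hr : (m' - m) ^ 2 / (2 * v) < r) :
    ∃ η > 0, ∀ (n : ℕ) (S : Set (Fin n → ℝ)), MeasurableSet S →
      G m v n S ≤ ENNReal.ofReal (Real.exp (-(n * r))) →
      G m' v n S ≤ 2 * ENNReal.ofReal (Real.exp (-(n * η))) := by
  have hv' : (0 : ℝ) < v := by positivity
  set d := (m' - m) ^ 2 / (2 * v) with hd
  have hd0 : 0 ≤ d := by positivity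
  obtain ⟨δ, hδ, hδr⟩ : ∃ δ > 0, r = d + 2 * δ := ⟨(r - d) / 2, by linarith, by ring⟩
  set u := δ / (2 * d + 1) with hu
  have hu0 : 0 < u := by positivity
  have hud : u * d ≤ δ / 2 := by
    rw [hu, div_mul_eq_mul_div, div_le_iff₀ (by positivity)]
    nlinarith
  refine ⟨min δ (u * δ / 2), by positivity, fun n S hS hP => ?_⟩
  set L : (Fin n → ℝ) → ℝ := fun x =>
    (m' - m) / v * ∑ i, x i - n * ((m' ^ 2 - m ^ 2) / (2 * v)) with hL
  have hLm : Measurable L := by fun_prop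
  have hn : (0 : ℝ) ≤ n := by positivity
  set B : Set (Fin n → ℝ) := {x | n * (d + δ) ≤ L x} with hB
  have hBm : MeasurableSet B := measurableSet_le measurable_const hLm
  have h1 : G m' v n (S \ B) ≤ ENNReal.ofReal (Real.exp (-(n * min δ (u * δ / 2)))) := by
    rw [G_density m m' hv n, withDensity_apply _ (hS.diff hBm)]
    calc _ ≤ ∫⁻ x in S \ B, ENNReal.ofReal (Real.exp (n * (d + δ))) ∂(G m v n) := by
          refine setLIntegral_mono (by fun_prop) fun x hx => ?_
          refine ENNReal.ofReal_le_ofReal (Real.exp_le_exp.2 ?_)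
          have := hx.2
          simp only [hB, Set.mem_setOf_eq, not_le] at this
          exact this.le
      _ = ENNReal.ofReal (Real.exp (n * (d + δ))) * G m v n (S \ B) := by
          rw [setLIntegral_const]
      _ ≤ ENNReal.ofReal (Real.exp (n * (d + δ))) * ENNReal.ofReal (Real.exp (-(n * r))) := by
          gcongr
          exact (measure_mono Set.diff_subset).trans hP
      _ ≤ _ := by
          rw [← ENNReal.ofReal_mul (Real.exp_pos _).le, ← Real.exp_add]
          refine ENNReal.ofReal_le_ofReal (Real.exp_le_exp.2 ?_)
          have := mul_le_mul_of_nonneg_left (min_le_left δ (u * δ / 2)) hn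
          rw [hδr]; linarith
  have h2 : G m' v n B ≤ ENNReal.ofReal (Real.exp (-(n * min δ (u * δ / 2)))) := by
    have hc := chernoff m' v n (u * ((m' - m) / v))
      (u * (n * (d + δ) + n * ((m' ^ 2 - m ^ 2) / (2 * v))))
    refine (measure_mono fun x hx => ?_).trans (hc.trans ?_)
    · simp only [hB, hL, Set.mem_setOf_eq] at hx ⊢
      rw [mul_assoc]
      refine mul_le_mul_of_nonneg_left ?_ hu0.le
      linarith
    · refine ENNReal.ofReal_le_ofReal (Real.exp_le_exp.2 ?_)
      have e : n * (m' * (u * ((m' - m) / v)) + v * (u * ((m' - m) / v)) ^ 2 / 2) -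
          u * (n * (d + δ) + n * ((m' ^ 2 - m ^ 2) / (2 * v))) = - (n * (u * (δ - u * d))) := by
        rw [hd]; field_simp; ring
      rw [e]
      have h3 := mul_le_mul_of_nonneg_left (min_le_right δ (u * δ / 2)) hn
      have h4 : u * δ / 2 ≤ u * (δ - u * d) := by nlinarith
      have h5 := mul_le_mul_of_nonneg_left h4 hn
      linarith
  calc G m' v n S ≤ G m' v n (S \ B ∪ B) := measure_mono (by intro x hx; by_cases h : x ∈ B <;> simp [h, hx])
    _ ≤ _ := measure_union_le _ _
    _ ≤ _ := add_le_add h1 h2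
    _ = _ := (two_mul _).symm

lemma expRate_ge {n : ℕ} (hn : 0 < n) {p : ℝ≥0∞} {r : ℝ}
    (h : p ≤ ENNReal.ofReal (Real.exp (-(n * r)))) : (r : EReal) ≤ expRate n p := by
  have hn' : (0 : ℝ) < n := by exact_mod_cast hn
  have h1 := ENNReal.log_le_log h
  rw [ENNReal.log_ofReal_of_pos (Real.exp_pos _), Real.log_exp] at h1
  have h2 := EReal.neg_le_neg_iff.2 h1
  have h3 := mul_le_mul_of_nonneg_left h2
    (show (0 : EReal) ≤ (((n : ℝ)⁻¹ : ℝ) : EReal) by exact_mod_cast (inv_pos.2 hn').le)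
  refine le_trans (le_of_eq ?_) h3
  rw [← EReal.coe_neg, ← EReal.coe_mul]
  congr 1
  field_simp

lemma le_of_lt_expRate {n : ℕ} (hn : 0 < n) {p : ℝ≥0∞} {r : ℝ}
    (h : (r : EReal) < expRate n p) : p ≤ ENNReal.ofReal (Real.exp (-(n * r))) := by
  have hn' : (0 : ℝ) < n := by exact_mod_cast hn
  by_contra hc
  push Not at hc
  refine absurd h (not_lt.2 ?_)
  have h1 := ENNReal.log_le_log hc.le
  rw [ENNReal.log_ofReal_of_pos (Real.exp_pos _), Real.log_exp] at h1
  have h2 := EReal.neg_le_neg_iff.2 h1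
  have h3 := mul_le_mul_of_nonneg_left h2
    (show (0 : EReal) ≤ (((n : ℝ)⁻¹ : ℝ) : EReal) by exact_mod_cast (inv_pos.2 hn').le)
  refine le_trans h3 (le_of_eq ?_)
  rw [← EReal.coe_neg, ← EReal.coe_mul]
  congr 1
  field_simp

lemma converse (κ κb m : ℝ) {v : ℝ≥0} (hv : v ≠ 0) {r E : ℝ}
    (hr : (m - κ) ^ 2 / (2 * v) < r) (h : rAchievable (G κ v) (G κb v) r E) :
    E ≤ (m - κb) ^ 2 / (2 * v) := by
  by_contra hE
  push Not at hE
  obtain ⟨A, hA, h1, h2⟩ := h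
  obtain ⟨r', hr1, hr2⟩ := exists_between hr
  obtain ⟨E', hE1, hE2⟩ := exists_between hE
  obtain ⟨η, hη, H1⟩ := change κ m hv r' hr1
  obtain ⟨η', hη', H2⟩ := change κb m hv E' hE1
  have e1 := eventually_lt_of_lt_liminf (lt_of_lt_of_le (EReal.coe_lt_coe_iff.2 hr2) h1)
  have e2 := eventually_lt_of_lt_liminf (lt_of_lt_of_le (EReal.coe_lt_coe_iff.2 hE2) h2)
  have key : ∀ c > 0, ∀ᶠ n : ℕ in atTop,
      ENNReal.ofReal (Real.exp (-(n * c))) < ENNReal.ofReal (1 / 8) := by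
    intro c hc
    have : Tendsto (fun n : ℕ => Real.exp (-(n * c))) atTop (nhds 0) :=
      Real.tendsto_exp_neg_atTop_nhds_zero.comp
        (tendsto_natCast_atTop_atTop.atTop_mul_const hc)
    filter_upwards [this.eventually_lt_const (show (0 : ℝ) < 1 / 8 by norm_num)] with n hn
    exact (ENNReal.ofReal_lt_ofReal_iff (by norm_num)).2 hn
  obtain ⟨n, ⟨⟨a1, a2⟩, a3⟩, a4, a5⟩ := (((e1.and e2).and (eventually_gt_atTop 0)).and
    ((key η hη).and (key η' hη'))).exists
  have b1 := H1 n _ (hA n).compl (le_of_lt_expRate a3 a1)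
  have b2 := H2 n _ (hA n) (le_of_lt_expRate a3 a2)
  have b3 : G m v n (A n) + G m v n (A n)ᶜ = 1 := by
    rw [measure_add_measure_compl (hA n)]; simp
  have b4 : (1 : ℝ≥0∞) ≤ 2 * ENNReal.ofReal (1 / 8) + 2 * ENNReal.ofReal (1 / 8) := by
    rw [← b3]
    exact add_le_add (b2.trans (by gcongr)) (b1.trans (by gcongr))
  rw [← ENNReal.ofReal_one, show (2 : ℝ≥0∞) = ENNReal.ofReal 2 by simp,
    ← ENNReal.ofReal_mul (by norm_num), ← ENNReal.ofReal_add (by norm_num) (by norm_num),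
    ENNReal.ofReal_le_ofReal_iff (by norm_num)] at b4
  norm_num at b4

lemma le_liminf_expRate {p : ℕ → ℝ≥0∞} {r : ℝ}
    (h : ∀ n, p n ≤ ENNReal.ofReal (Real.exp (-(n * r)))) :
    (r : EReal) ≤ Filter.atTop.liminf fun n => expRate n (p n) := by
  refine le_liminf_of_le (by isBoundedDefault) ?_
  filter_upwards [eventually_gt_atTop 0] with n hn using expRate_ge hn (h n)

lemma achieve (κ κb : ℝ) {v : ℝ≥0} (hv : v ≠ 0) {t : ℝ} (ht : 0 ≤ t) (ht1 : t ≤ 1) :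
    rAchievable (G κ v) (G κb v) (t ^ 2 * ((κ - κb) ^ 2 / (2 * v)))
      ((1 - t) ^ 2 * ((κ - κb) ^ 2 / (2 * v))) := by
  have hv' : (0 : ℝ) < v := by positivity
  set Δ := κb - κ with hΔ
  have hS : ∀ n : ℕ, MeasurableSet {x : Fin n → ℝ | n * (Δ * (κ + t * Δ)) ≤ Δ * ∑ i, x i} :=
    fun n => measurableSet_le measurable_const (by fun_prop)
  refine ⟨fun n => {x | n * (Δ * (κ + t * Δ)) ≤ Δ * ∑ i, x i}ᶜ, fun n => (hS n).compl,
    le_liminf_expRate fun n => ?_, le_liminf_expRate fun n => ?_⟩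
  · rw [compl_compl]
    refine (measure_mono fun x hx => ?_).trans ((chernoff κ v n (t / v * Δ)
      (t / v * (n * (Δ * (κ + t * Δ))))).trans (le_of_eq ?_))
    · simp only [Set.mem_setOf_eq] at hx ⊢
      rw [mul_assoc (t / v)]
      exact mul_le_mul_of_nonneg_left hx (by positivity)
    · congr 2
      rw [hΔ]; field_simp; ring
  · refine (measure_mono fun x hx => ?_).trans ((chernoff κb v n (-((1 - t) / v * Δ))
      (-((1 - t) / v * (n * (Δ * (κ + t * Δ)))))).trans (le_of_eq ?_))
    · simp only [Set.mem_setOf_eq, Set.mem_compl_iff, not_le] at hx ⊢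
      rw [neg_mul, mul_assoc ((1 - t) / v), neg_le_neg_iff]
      exact mul_le_mul_of_nonneg_left hx.le (div_nonneg (by linarith) hv'.le)
    · congr 2
      rw [hΔ]; field_simp; ring

end GEE

/-- Example 3.5: Gaussian error exponent. For i.i.d. hypotheses `N(κ,σ²)^{⊗n}` vs
`N(κ̄,σ²)^{⊗n}` with `κ ≠ κ̄` and `a = (κ-κ̄)²/(2σ²)`, for every `r > 0`
 `B_e(r) = (√r - √a)²` if `r ≤ a` and `B_e(r) = 0` otherwise. -/
theorem gaussian_error_exponent (κ κb σ : ℝ) (hκ : κ ≠ κb) (hσ : 0 < σ)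
    (r : ℝ) (hr : 0 < r) :
    Be (fun n => Measure.pi fun _ : Fin n => gaussianReal κ ⟨σ ^ 2, sq_nonneg σ⟩)
       (fun n => Measure.pi fun _ : Fin n => gaussianReal κb ⟨σ ^ 2, sq_nonneg σ⟩) r
      = if r ≤ (κ - κb) ^ 2 / (2 * σ ^ 2) then
          (((Real.sqrt r - Real.sqrt ((κ - κb) ^ 2 / (2 * σ ^ 2))) ^ 2 : ℝ) : EReal)
        else 0 := by
  set v : ℝ≥0 := ⟨σ ^ 2, sq_nonneg σ⟩ with hvdef
  have hvσ : (v : ℝ) = σ ^ 2 := rfl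
  have hv : v ≠ 0 := by
    intro h
    have : (v : ℝ) = 0 := by rw [h]; rfl
    rw [hvσ] at this
    exact (pow_pos hσ 2).ne' this
  rw [← hvσ]
  have hv' : (0 : ℝ) < v := by positivity
  set a := (κ - κb) ^ 2 / (2 * (v : ℝ)) with ha
  have hd : κ - κb ≠ 0 := sub_ne_zero.2 hκ
  have ha0 : 0 < a := by positivity
  have conv : ∀ E s : ℝ, rAchievable (GEE.G κ v) (GEE.G κb v) r E → s ^ 2 * a < r →
      E ≤ (1 - s) ^ 2 * a := by
    intro E s h hs
    have := GEE.converse κ κb (κ + s * (κb - κ)) hv (r := r) (E := E)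
      (by convert hs using 1; rw [ha]; field_simp; ring) h
    convert this using 1
    rw [ha]; field_simp; ring
  change Be (GEE.G κ v) (GEE.G κb v) r = _
  split_ifs with hra
  · set t := Real.sqrt r / Real.sqrt a with ht
    have hsa : 0 < Real.sqrt a := Real.sqrt_pos.2 ha0
    have hsr : 0 < Real.sqrt r := Real.sqrt_pos.2 hr
    have ht0 : 0 < t := by positivity
    have ht1 : t ≤ 1 := (div_le_one hsa).2 (Real.sqrt_le_sqrt hra)
    have e1 : t ^ 2 * a = r := by
      rw [ht, div_pow, Real.sq_sqrt hr.le, Real.sq_sqrt ha0.le]; field_simp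
    have e2 : (1 - t) ^ 2 * a = (Real.sqrt r - Real.sqrt a) ^ 2 := by
      have : Real.sqrt r = t * Real.sqrt a := by rw [ht]; field_simp
      rw [this]
      nth_rewrite 1 [← Real.sq_sqrt ha0.le]
      ring
    rw [← e2]
    apply le_antisymm
    · refine sSup_le ?_
      rintro x ⟨E, hE, rfl⟩
      rw [EReal.coe_le_coe_iff]
      have hc : Tendsto (fun s : ℝ => (1 - s) ^ 2 * a) (nhdsWithin t (Set.Iio t))
          (nhds ((1 - t) ^ 2 * a)) :=
        (Continuous.tendsto (by fun_prop) t).mono_left nhdsWithin_le_nhds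
      refine ge_of_tendsto hc ?_
      filter_upwards [Ioo_mem_nhdsLT ht0] with s hs
      refine conv E s hE ?_
      rw [← e1]
      have := pow_lt_pow_left₀ hs.2 hs.1.le two_ne_zero
      exact mul_lt_mul_of_pos_right this ha0
    · refine le_sSup ⟨_, ?_, rfl⟩
      have := GEE.achieve κ κb hv ht0.le ht1
      rw [← ha, e1] at this
      exact this
  · push Not at hra
    apply le_antisymm
    · refine sSup_le ?_
      rintro x ⟨E, hE, rfl⟩
      have := conv E 1 hE (by linarith)
      rw [← EReal.coe_zero, EReal.coe_le_coe_iff]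
      linarith
    · refine le_sSup ⟨0, ⟨fun _ => Set.univ, fun _ => MeasurableSet.univ,
        GEE.le_liminf_expRate fun n => ?_, GEE.le_liminf_expRate fun n => ?_⟩, by simp⟩
      · simp
      · simp
end

section
/- (Example 3.6, a source with discontinuous divergence spectrum, eq. (3.47)) Let X = {0,1} and fix 0 < α < 1. For every n such that ⌊2^{αn}⌋ + 2 ≤ 2ⁿ, choose a set S_n ⊆ Xⁿ with |S_n| = ⌊2^{αn}⌋ and two distinct points x₀, x₁ ∈ Xⁿ \ S_n, and define the null hypothesis P_n on Xⁿ by P_n({x}) = 2^{−2αn} for x ∈ S_n, P_n({x₁}) = 2^{−3αn}, P_n({x₀}) = 1 − ⌊2^{αn}⌋·2^{−2αn} − 2^{−3αn}, and P_n({x}) = 0 otherwise (for the finitely many remaining n let P_n be an arbitrary probability distribution on Xⁿ). Let the alternative hypothesis Q_n be the uniform distribution on Xⁿ, Q_n({x}) = 2^{−n}. Then, with all exponents measured to base 2 (i.e., using log₂ in the definitions of achievability), for every r > 0: B_e(r) = 1 − α if r > α, and B_e(r) = 1 if 0 < r ≤ α. -/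
open MeasureTheory Filter
open scoped ENNReal NNReal

/-- The base-2 exponent `-(1/n) log₂ p` of a nonneg extended real `p`, valued in `EReal`,
with the conventions `-log₂ 0 = +∞` and `-log₂ ∞ = -∞`. -/
noncomputable def expRate2 (n : ℕ) (p : ℝ≥0∞) : EReal :=
  ((((n : ℝ) * Real.log 2)⁻¹ : ℝ) : EReal) * (-(ENNReal.log p))

section Setup

variable {Ω : ℕ → Type*} [∀ n, MeasurableSpace (Ω n)]

/-- `E` is `r`-achievable (base-2 exponents): there are acceptance regions `A n` with
`liminf -(1/n) log₂ μ_n ≥ r` and `liminf -(1/n) log₂ λ_n ≥ E`. -/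
def rAchievable2 (P Q : ∀ n, Measure (Ω n)) (r E : ℝ) : Prop :=
  ∃ A : ∀ n, Set (Ω n), (∀ n, MeasurableSet (A n)) ∧
    (r : EReal) ≤ Filter.atTop.liminf (fun n => expRate2 n ((P n) (A n)ᶜ)) ∧
    (E : EReal) ≤ Filter.atTop.liminf (fun n => expRate2 n ((Q n) (A n)))

/-- The optimal error exponent `B_e(r)` (base-2 exponents). -/
noncomputable def Be2 (P Q : ∀ n, Measure (Ω n)) (r : ℝ) : EReal :=
  sSup {x : EReal | ∃ E : ℝ, rAchievable2 P Q r E ∧ x = (E : EReal)}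

end Setup

lemma aux_rate_anti (n : ℕ) {p q : ℝ≥0∞} (h : p ≤ q) : expRate2 n q ≤ expRate2 n p := by
  unfold expRate2
  apply mul_le_mul_of_nonneg_left
  · exact EReal.neg_le_neg_iff.2 (ENNReal.log_monotone h)
  · have : (0:ℝ) ≤ (((n : ℝ) * Real.log 2)⁻¹ : ℝ) :=
      inv_nonneg.2 (mul_nonneg (Nat.cast_nonneg _) (Real.log_nonneg (by norm_num)))
    exact_mod_cast this

lemma aux_rate_tendsto (C c : ℝ) (hC : 0 < C) :
    Tendsto (fun n : ℕ => expRate2 n (ENNReal.ofReal (C * (2:ℝ) ^ (-(c * n))))) atTop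
      (nhds (c : EReal)) := by
  have hl : 0 < Real.log 2 := Real.log_pos (by norm_num)
  have h1 : Tendsto (fun n : ℕ => c - (Real.log C / Real.log 2) / (n:ℝ)) atTop (nhds (c - 0)) :=
    tendsto_const_nhds.sub (tendsto_const_div_atTop_nhds_zero_nat _)
  rw [sub_zero] at h1
  have h2 := (continuous_coe_real_ereal.tendsto c).comp h1
  refine h2.congr' ?_
  filter_upwards [eventually_gt_atTop 0] with n hn
  have hn' : (0:ℝ) < n := by exact_mod_cast hn
  have hp : (0:ℝ) < (2:ℝ) ^ (-(c * n)) := Real.rpow_pos_of_pos (by norm_num) _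
  unfold expRate2
  rw [ENNReal.log_ofReal_of_pos (by positivity)]
  rw [Real.log_mul hC.ne' hp.ne', Real.log_rpow (by norm_num)]
  rw [← EReal.coe_neg, ← EReal.coe_mul]
  simp only [Function.comp]
  congr 1
  field_simp
  ring

lemma aux_le_liminf (C c : ℝ) (hC : 0 < C) (p : ℕ → ℝ≥0∞)
    (h : ∀ᶠ n : ℕ in atTop, p n ≤ ENNReal.ofReal (C * (2:ℝ) ^ (-(c * n)))) :
    (c : EReal) ≤ atTop.liminf (fun n => expRate2 n (p n)) := by
  rw [← (aux_rate_tendsto C c hC).liminf_eq]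
  refine liminf_le_liminf ?_
  filter_upwards [h] with n hn using aux_rate_anti n hn

lemma aux_liminf_le (C c : ℝ) (hC : 0 < C) (p : ℕ → ℝ≥0∞)
    (h : ∃ᶠ n : ℕ in atTop, ENNReal.ofReal (C * (2:ℝ) ^ (-(c * n))) ≤ p n) :
    atTop.liminf (fun n => expRate2 n (p n)) ≤ (c : EReal) := by
  by_contra! hc
  obtain ⟨b, hb1, hb2⟩ := exists_between hc
  have h1 := eventually_lt_of_lt_liminf hb2
  have h2 := (aux_rate_tendsto C c hC).eventually_lt_const hb1
  obtain ⟨n, hn, h3, h4⟩ := (h.and_eventually (h1.and h2)).exists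
  exact absurd (aux_rate_anti n hn) (not_le.2 (h4.trans h3))

lemma aux_cond (α : ℝ) (hα1 : α < 1) :
    ∀ᶠ n : ℕ in atTop, Nat.floor ((2 : ℝ) ^ (α * n)) + 2 ≤ 2 ^ n := by
  have h : Tendsto (fun n : ℕ => (1 - α) * (n:ℝ)) atTop atTop :=
    tendsto_natCast_atTop_atTop.const_mul_atTop (by linarith)
  filter_upwards [h.eventually_ge_atTop 1, eventually_ge_atTop 2] with n hn h2
  have hf : ((Nat.floor ((2 : ℝ) ^ (α * n)) : ℕ) : ℝ) ≤ (2 : ℝ) ^ (α * n) :=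
    Nat.floor_le (by positivity)
  have h3 : (2:ℝ) ^ (α * n) ≤ (2:ℝ) ^ ((n:ℝ) - 1) :=
    Real.rpow_le_rpow_of_exponent_le (by norm_num) (by linarith)
  rw [Real.rpow_sub (by norm_num), Real.rpow_one, Real.rpow_natCast] at h3
  have h4 : (2:ℝ)^2 ≤ 2 ^ n := pow_le_pow_right₀ (by norm_num) h2
  have : ((Nat.floor ((2 : ℝ) ^ (α * n)) + 2 : ℕ) : ℝ) ≤ ((2 ^ n : ℕ) : ℝ) := by
    push_cast; linarith
  exact_mod_cast this

lemma aux_measure_finset {n : ℕ} (μ : Measure (Fin n → Bool)) (T : Finset (Fin n → Bool)) (c : ℝ)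
    (h : ∀ x ∈ T, μ {x} = ENNReal.ofReal c) :
    μ (T : Set (Fin n → Bool)) = ENNReal.ofReal (T.card * c) := by
  rw [← sum_measure_singleton, Finset.sum_congr rfl h, Finset.sum_const, nsmul_eq_mul,
    ENNReal.ofReal_mul (by positivity), ENNReal.ofReal_natCast]

/-- Example 3.6 (eq. (3.47)): a null hypothesis with discontinuous divergence spectrum
against the uniform alternative on `{0,1}ⁿ`. With base-2 exponents,
`B_e(r) = 1 - α` for `r > α` and `B_e(r) = 1` for `0 < r ≤ α`. -/
theorem discontinuous_spectrum_error_exponent (α : ℝ) (hα0 : 0 < α) (hα1 : α < 1)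
    (S : ∀ n : ℕ, Finset (Fin n → Bool)) (x₀ x₁ : ∀ n : ℕ, Fin n → Bool)
    (P Q : ∀ n : ℕ, Measure (Fin n → Bool))
    [∀ n, IsProbabilityMeasure (P n)] [∀ n, IsProbabilityMeasure (Q n)]
    (hcard : ∀ n : ℕ, Nat.floor ((2 : ℝ) ^ (α * n)) + 2 ≤ 2 ^ n →
      (S n).card = Nat.floor ((2 : ℝ) ^ (α * n)))
    (hx₀ : ∀ n : ℕ, Nat.floor ((2 : ℝ) ^ (α * n)) + 2 ≤ 2 ^ n → x₀ n ∉ S n)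
    (hx₁ : ∀ n : ℕ, Nat.floor ((2 : ℝ) ^ (α * n)) + 2 ≤ 2 ^ n → x₁ n ∉ S n)
    (hne : ∀ n : ℕ, Nat.floor ((2 : ℝ) ^ (α * n)) + 2 ≤ 2 ^ n → x₀ n ≠ x₁ n)
    (hPS : ∀ n : ℕ, Nat.floor ((2 : ℝ) ^ (α * n)) + 2 ≤ 2 ^ n →
      ∀ x ∈ S n, (P n) {x} = ENNReal.ofReal ((2 : ℝ) ^ (-(2 * α * n))))
    (hPx₁ : ∀ n : ℕ, Nat.floor ((2 : ℝ) ^ (α * n)) + 2 ≤ 2 ^ n →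
      (P n) {x₁ n} = ENNReal.ofReal ((2 : ℝ) ^ (-(3 * α * n))))
    (hPx₀ : ∀ n : ℕ, Nat.floor ((2 : ℝ) ^ (α * n)) + 2 ≤ 2 ^ n →
      (P n) {x₀ n} = ENNReal.ofReal
        (1 - (Nat.floor ((2 : ℝ) ^ (α * n)) : ℝ) * (2 : ℝ) ^ (-(2 * α * n))
          - (2 : ℝ) ^ (-(3 * α * n))))
    (hP0 : ∀ n : ℕ, Nat.floor ((2 : ℝ) ^ (α * n)) + 2 ≤ 2 ^ n →
      ∀ x : Fin n → Bool, x ∉ S n → x ≠ x₀ n → x ≠ x₁ n → (P n) {x} = 0)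
    (hQ : ∀ (n : ℕ) (x : Fin n → Bool), (Q n) {x} = ENNReal.ofReal ((2 : ℝ) ^ (-(n : ℝ))))
    (r : ℝ) (hr : 0 < r) :
    Be2 P Q r = if α < r then (((1 - α : ℝ)) : EReal) else (1 : EReal) := by
  have hc := aux_cond α hα1
  have hms : ∀ n (A : Set (Fin n → Bool)), MeasurableSet A := fun n A => A.toFinite.measurableSet
  have hfl : ∀ n : ℕ, ((Nat.floor ((2 : ℝ) ^ (α * n)) : ℕ) : ℝ) ≤ (2 : ℝ) ^ (α * n) :=
    fun n => Nat.floor_le (by positivity)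
  have hge1 : ∀ n : ℕ, 1 ≤ (2 : ℝ) ^ (α * n) := fun n =>
    Real.one_le_rpow (by norm_num) (by positivity)
  have hfl2 : ∀ n : ℕ, (2 : ℝ) ^ (α * n) / 2 ≤ ((Nat.floor ((2 : ℝ) ^ (α * n)) : ℕ) : ℝ) := by
    intro n
    have h1 := Nat.lt_floor_add_one ((2 : ℝ) ^ (α * n))
    have h2 : 1 ≤ Nat.floor ((2 : ℝ) ^ (α * n)) := Nat.le_floor (by simpa using hge1 n)
    have h3 : (1:ℝ) ≤ ((Nat.floor ((2 : ℝ) ^ (α * n)) : ℕ) : ℝ) := by exact_mod_cast h2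
    linarith
  have hmul : ∀ a b : ℝ, (2:ℝ) ^ a * (2:ℝ) ^ b = (2:ℝ) ^ (a + b) := fun a b =>
    (Real.rpow_add (by norm_num) a b).symm
  have hQT : ∀ n (T : Finset (Fin n → Bool)),
      Q n (T : Set (Fin n → Bool)) = ENNReal.ofReal (T.card * (2 : ℝ) ^ (-(n : ℝ))) :=
    fun n T => aux_measure_finset (Q n) T _ (fun x _ => hQ n x)
  unfold Be2
  split_ifs with hαr
  · apply le_antisymm
    · apply sSup_le
      rintro _ ⟨E, ⟨A, -, hA1, hA2⟩, rfl⟩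
      refine hA2.trans (aux_liminf_le (1/4) (1 - α) (by norm_num) _ ?_)
      have hev : ∀ᶠ n : ℕ in atTop,
          ¬ ENNReal.ofReal ((1/4) * (2:ℝ) ^ (-(α * n))) ≤ P n (A n)ᶜ := by
        rw [← not_frequently]
        intro hf
        have := hA1.trans (aux_liminf_le (1/4) α (by norm_num) _ hf)
        exact absurd (EReal.coe_le_coe_iff.1 this) (not_le.2 hαr)
      apply Eventually.frequently
      filter_upwards [hev, hc] with n hn hcn
      classical
      have hsum : ((S n).filter (· ∈ A n)).card + ((S n).filter (¬ · ∈ A n)).card = (S n).card :=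
        Finset.card_filter_add_card_filter_not _
      rw [hcard n hcn] at hsum
      have hsum' : (((S n).filter (· ∈ A n)).card : ℝ) + (((S n).filter (¬ · ∈ A n)).card : ℝ)
          = ((Nat.floor ((2 : ℝ) ^ (α * n)) : ℕ) : ℝ) := by exact_mod_cast hsum
      have hlt : (((S n).filter (¬ · ∈ A n)).card : ℝ) < (2 : ℝ) ^ (α * n) / 4 := by
        by_contra! hcon
        apply hn
        calc ENNReal.ofReal ((1/4) * (2:ℝ) ^ (-(α * n)))
            ≤ ENNReal.ofReal ((((S n).filter (¬ · ∈ A n)).card : ℝ) * (2:ℝ) ^ (-(2 * α * n))) := by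
              apply ENNReal.ofReal_le_ofReal
              have := mul_le_mul_of_nonneg_right hcon
                (Real.rpow_nonneg (by norm_num : (0:ℝ) ≤ 2) (-(2 * α * n)))
              refine le_trans (le_of_eq ?_) this
              rw [div_mul_eq_mul_div ((2:ℝ) ^ (α * (n:ℝ))), hmul, show α * n + -(2 * α * n) = -(α * n) by ring]
              ring
          _ = P n (((S n).filter (¬ · ∈ A n) : Finset _) : Set (Fin n → Bool)) :=
              (aux_measure_finset (P n) _ _ fun x hx =>
                hPS n hcn x (Finset.mem_filter.1 hx).1).symm
          _ ≤ P n (A n)ᶜ := measure_mono fun x hx => (Finset.mem_filter.1 (Finset.mem_coe.1 hx)).2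
      calc ENNReal.ofReal ((1/4) * (2:ℝ) ^ (-((1 - α) * n)))
          ≤ ENNReal.ofReal ((((S n).filter (· ∈ A n)).card : ℝ) * (2:ℝ) ^ (-(n:ℝ))) := by
            apply ENNReal.ofReal_le_ofReal
            have h1 : (2 : ℝ) ^ (α * n) / 4 ≤ (((S n).filter (· ∈ A n)).card : ℝ) := by
              linarith [hfl2 n]
            have := mul_le_mul_of_nonneg_right h1
              (Real.rpow_nonneg (by norm_num : (0:ℝ) ≤ 2) (-(n:ℝ)))
            refine le_trans (le_of_eq ?_) this
            rw [div_mul_eq_mul_div ((2:ℝ) ^ (α * (n:ℝ))), hmul, show α * n + -(n:ℝ) = -((1 - α) * n) by ring]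
            ring
        _ = Q n (((S n).filter (· ∈ A n) : Finset _) : Set (Fin n → Bool)) := (hQT n _).symm
        _ ≤ Q n (A n) := measure_mono fun x hx => (Finset.mem_filter.1 (Finset.mem_coe.1 hx)).2
    · apply le_sSup
      classical
      refine ⟨1 - α, ⟨fun n => ((insert (x₀ n) (insert (x₁ n) (S n)) : Finset _) : Set _),
        fun n => hms n _, ?_, ?_⟩, rfl⟩
      · apply aux_le_liminf 1 r one_pos
        filter_upwards [hc] with n hcn
        have : P n (((insert (x₀ n) (insert (x₁ n) (S n)) : Finset _) : Set (Fin n → Bool))ᶜ)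
            = 0 := by
          rw [← Finset.coe_compl, aux_measure_finset (P n) _ 0, mul_zero, ENNReal.ofReal_zero]
          intro x hx
          simp only [Finset.mem_compl, Finset.mem_insert, not_or] at hx
          rw [hP0 n hcn x hx.2.2 hx.1 hx.2.1, ENNReal.ofReal_zero]
        rw [this]
        exact zero_le
      · apply aux_le_liminf 3 (1 - α) (by norm_num)
        filter_upwards [hc] with n hcn
        rw [hQT]
        apply ENNReal.ofReal_le_ofReal
        have h1 : (insert (x₀ n) (insert (x₁ n) (S n))).card ≤ (S n).card + 2 :=
          (Finset.card_insert_le _ _).trans (by have := Finset.card_insert_le (x₁ n) (S n); omega)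
        rw [hcard n hcn] at h1
        have h2 : ((insert (x₀ n) (insert (x₁ n) (S n))).card : ℝ)
            ≤ ((Nat.floor ((2 : ℝ) ^ (α * n)) : ℕ) : ℝ) + 2 := by exact_mod_cast h1
        have h3 : ((insert (x₀ n) (insert (x₁ n) (S n))).card : ℝ) ≤ 3 * (2 : ℝ) ^ (α * n) := by
          linarith [hfl n, hge1 n]
        refine (mul_le_mul_of_nonneg_right h3
              (Real.rpow_nonneg (by norm_num : (0:ℝ) ≤ 2) (-(n:ℝ)))).trans (le_of_eq ?_)
        rw [mul_assoc, hmul, show α * n + -(n:ℝ) = -((1 - α) * n) by ring]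
  · push Not at hαr
    apply le_antisymm
    · apply sSup_le
      rintro _ ⟨E, ⟨A, -, hA1, hA2⟩, rfl⟩
      refine hA2.trans ?_
      rw [← EReal.coe_one]
      refine aux_liminf_le 1 1 (by norm_num) _ ?_
      have hev : ∀ᶠ n : ℕ in atTop,
          ¬ ENNReal.ofReal (1 * (2:ℝ) ^ (-(0 * (n:ℝ)))) ≤ P n (A n)ᶜ := by
        rw [← not_frequently]
        intro hf
        have := hA1.trans (aux_liminf_le 1 0 (by norm_num) _ hf)
        exact absurd (EReal.coe_le_coe_iff.1 this) (not_le.2 hr)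
      apply Eventually.frequently
      filter_upwards [hev] with n hn
      have hne : (A n).Nonempty := by
        rw [Set.nonempty_iff_ne_empty]
        intro h
        apply hn
        rw [h]
        simp
      obtain ⟨x, hx⟩ := hne
      rw [one_mul, one_mul, ← hQ n x]
      exact measure_mono (Set.singleton_subset_iff.2 hx)
    · apply le_sSup
      refine ⟨1, ⟨fun n => {x₀ n}, fun n => hms n _, ?_, ?_⟩, EReal.coe_one.symm⟩
      · refine le_trans (EReal.coe_le_coe_iff.2 hαr) ?_
        apply aux_le_liminf 2 α (by norm_num)
        filter_upwards [hc] with n hcn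
        rw [prob_compl_eq_one_sub (hms n _), hPx₀ n hcn, tsub_le_iff_right]
        have hy : (Nat.floor ((2 : ℝ) ^ (α * n)) : ℝ) * (2 : ℝ) ^ (-(2 * α * n))
          + (2 : ℝ) ^ (-(3 * α * n)) ≤ 2 * (2:ℝ) ^ (-(α * n)) := by
          have h1 := mul_le_mul_of_nonneg_right (hfl n)
              (Real.rpow_nonneg (by norm_num : (0:ℝ) ≤ 2) (-(2 * α * n)))
          rw [hmul, show α * n + -(2 * α * n) = -(α * n) by ring] at h1
          have h2 : (2 : ℝ) ^ (-(3 * α * n)) ≤ (2:ℝ) ^ (-(α * n)) := by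
            apply Real.rpow_le_rpow_of_exponent_le (by norm_num)
            have : 0 ≤ α * n := by positivity
            linarith
          linarith
        refine le_trans ?_ ENNReal.ofReal_add_le
        rw [← ENNReal.ofReal_one]
        apply ENNReal.ofReal_le_ofReal
        linarith
      · apply aux_le_liminf 1 1 (by norm_num)
        refine Eventually.of_forall fun n => ?_
        rw [hQ, one_mul, one_mul]
end
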